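/- If t is a region quadtree well-formed for a half-open square R of side w > 0 and p ∈ R, then insert(p, t, R) is well-formed for R and keys(insert(p, t, R)) = keys(t) ∪ {p}. In particular, insertion preserves the quadtree properties: every leaf key remains inside the region of the node that stores it. -/

import Mathlib

/-- The four quadrant directions. -/
inductive Dir : Type
  | nw | ne | sw | se
  deriving DecidableEq

noncomputable section

/-- A half-open square `[x, x+w) × [y, y+w)` given by its corner `(x, y)` and side `w`. -/
structure Sq where
  x : ℝ
  y : ℝ
  w : ℝ

/-- The set of points of a half-open square. -/
def Sq.set (R : Sq) : Set (ℝ × ℝ) :=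
  {p : ℝ × ℝ | R.x ≤ p.1 ∧ p.1 < R.x + R.w ∧ R.y ≤ p.2 ∧ p.2 < R.y + R.w}

/-- The quadrant of a square in a given direction: a half-open square of side `w/2`. -/
def Sq.quad (R : Sq) : Dir → Sq
  | .nw => ⟨R.x, R.y, R.w / 2⟩
  | .ne => ⟨R.x + R.w / 2, R.y, R.w / 2⟩
  | .sw => ⟨R.x, R.y + R.w / 2, R.w / 2⟩
  | .se => ⟨R.x + R.w / 2, R.y + R.w / 2, R.w / 2⟩

/-- The direction (routing quadrant) of a point `p` in the square `R`. -/
def Sq.dirOf (R : Sq) (p : ℝ × ℝ) : Dir :=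
  if p.1 < R.x + R.w / 2 then
    if p.2 < R.y + R.w / 2 then .nw else .sw
  else
    if p.2 < R.y + R.w / 2 then .ne else .se

/-- The square reached after `d` routing steps for the point `p`, starting from the root
square `R` (so `routeSq R p 0 = R`). -/
def routeSq (R : Sq) (p : ℝ × ℝ) : ℕ → Sq
  | 0 => R
  | n + 1 => (routeSq R p n).quad ((routeSq R p n).dirOf p)

/-- The `n`-th element of the routing sequence of `p`, i.e. the direction taken at step `n`. -/
def routeDir (R : Sq) (p : ℝ × ℝ) (n : ℕ) : Dir :=
  (routeSq R p n).dirOf p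

/-- A region quadtree: `empty`, a `leaf` storing a key, or an `internal` node with four
children (nw, ne, sw, se). -/
inductive QTree : Type
  | empty : QTree
  | leaf (p : ℝ × ℝ) : QTree
  | internal (nw ne sw se : QTree) : QTree
  deriving DecidableEq

/-- The child of a tree in a given direction (for internal nodes). -/
def QTree.child : QTree → Dir → QTree
  | .internal a _ _ _, .nw => a
  | .internal _ b _ _, .ne => b
  | .internal _ _ c _, .sw => c
  | .internal _ _ _ e, .se => e
  | _, _ => .empty

/-- The set of keys appearing in the leaf nodes of a quadtree. -/
def QTree.keys : QTree → Set (ℝ × ℝ)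
  | .empty => ∅
  | .leaf p => {p}
  | .internal a b c e => a.keys ∪ b.keys ∪ c.keys ∪ e.keys

/-- `WF t R`: the tree `t` is well-formed for the half-open square `R`: an `empty` tree is
well-formed; a leaf is well-formed if its key lies in `R`; an internal node is well-formed if
each child is well-formed for the corresponding quadrant of `R`. -/
inductive WF : QTree → Sq → Prop
  | empty (R : Sq) : WF .empty R
  | leaf (p : ℝ × ℝ) (R : Sq) (hp : p ∈ R.set) : WF (.leaf p) R
  | internal (a b c e : QTree) (R : Sq)
      (ha : WF a (R.quad .nw)) (hb : WF b (R.quad .ne))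
      (hc : WF c (R.quad .sw)) (he : WF e (R.quad .se)) :
      WF (.internal a b c e) R

/-- The internal node whose child in direction `d` is `f d`. -/
def mkNode (f : Dir → QTree) : QTree :=
  .internal (f .nw) (f .ne) (f .sw) (f .se)

/-- Fuelled version of `split`: given fuel `n + 1`, if `p` and `q` lie in different quadrants
of `R`, return the internal node with `leaf p` and `leaf q` in their respective quadrants and
`empty` elsewhere; otherwise recurse (with fuel `n`) into the common quadrant containing `p`
and `q`, placing `empty` elsewhere. -/
def splitFuel : ℕ → ℝ × ℝ → ℝ × ℝ → Sq → QTree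
  | 0, _, _, _ => .empty
  | n + 1, p, q, R =>
    if R.dirOf p = R.dirOf q then
      mkNode fun d => if d = R.dirOf p then splitFuel n p q (R.quad (R.dirOf p)) else .empty
    else
      mkNode fun d =>
        if d = R.dirOf p then .leaf p else if d = R.dirOf q then .leaf q else .empty

open Classical in
/-- Enough fuel for the recursion defining `split p q R`: one more than the first depth
(along the routing path of `p`) at which `p` and `q` take different directions. -/
def splitDepth (p q : ℝ × ℝ) (R : Sq) : ℕ :=
  if h : ∃ n : ℕ, (routeSq R p n).dirOf p ≠ (routeSq R p n).dirOf q then Nat.find h + 1 else 0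

/-- `split p q R`, the region quadtree containing exactly the two distinct keys `p, q ∈ R`,
defined by the recursion described above (realized via the fuelled function with enough
fuel for the recursion to have terminated). -/
def split (p q : ℝ × ℝ) (R : Sq) : QTree :=
  splitFuel (splitDepth p q R) p q R

/-- Insertion of a key `p` into a quadtree well-formed for the region `R`. -/
def qinsert (p : ℝ × ℝ) : QTree → Sq → QTree
  | .empty, _ => .leaf p
  | .leaf q, R => if q = p then .leaf p else split p q R
  | .internal a b c e, R =>
    match R.dirOf p with
    | .nw => .internal (qinsert p a (R.quad .nw)) b c e
    | .ne => .internal a (qinsert p b (R.quad .ne)) c e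
    | .sw => .internal a b (qinsert p c (R.quad .sw)) e
    | .se => .internal a b c (qinsert p e (R.quad .se))

/-- The subtree of `t` at a direction sequence (defined only when the path exists). -/
def subtreeAt : QTree → List Dir → Option QTree
  | t, [] => some t
  | .internal a b c e, d :: s =>
    match d with
    | .nw => subtreeAt a s
    | .ne => subtreeAt b s
    | .sw => subtreeAt c s
    | .se => subtreeAt e s
  | .empty, _ :: _ => none
  | .leaf _, _ :: _ => none

/-!
Routing a point `p ∈ R` down `n` levels leads to a square of side `R.w / 2 ^ n` that still
contains `p`. Two points routed the same way forever would share all these squares, so their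
distance would be `0`; hence distinct points are eventually separated, which is what makes `split`
terminate with both keys present. Insertion only modifies the child in the direction of `p`, so
the claim for `qinsert` follows by induction on the well-formedness of the tree.
-/

section Routing

variable {R : Sq} {p q : ℝ × ℝ}

theorem Sq.mem_quad_dirOf (hp : p ∈ R.set) : p ∈ (R.quad (R.dirOf p)).set := by
  obtain ⟨hx, hx', hy, hy'⟩ := hp
  unfold Sq.dirOf
  split_ifs <;> refine ⟨?_, ?_, ?_, ?_⟩ <;> dsimp only [Sq.quad] <;> linarith

theorem Sq.quad_w (R : Sq) (d : Dir) : (R.quad d).w = R.w / 2 := by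
  cases d <;> rfl

theorem Sq.dist_lt_w (hp : p ∈ R.set) (hq : q ∈ R.set) : dist p q < R.w := by
  obtain ⟨hpx, hpx', hpy, hpy'⟩ := hp
  obtain ⟨hqx, hqx', hqy, hqy'⟩ := hq
  rw [Prod.dist_eq, max_lt_iff, Real.dist_eq, Real.dist_eq, abs_sub_lt_iff, abs_sub_lt_iff]
  refine ⟨⟨?_, ?_⟩, ?_, ?_⟩ <;> linarith

theorem mem_routeSq (hp : p ∈ R.set) (n : ℕ) : p ∈ (routeSq R p n).set := by
  induction n with
  | zero => exact hp
  | succ n ih => exact Sq.mem_quad_dirOf ih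

theorem routeSq_w (R : Sq) (p : ℝ × ℝ) (n : ℕ) : (routeSq R p n).w = R.w / 2 ^ n := by
  induction n with
  | zero => rw [routeSq, pow_zero, div_one]
  | succ n ih => rw [routeSq, Sq.quad_w, ih, pow_succ, div_div]

theorem routeSq_succ' (R : Sq) (p : ℝ × ℝ) (n : ℕ) :
    routeSq R p (n + 1) = routeSq (R.quad (R.dirOf p)) p n := by
  induction n with
  | zero => rfl
  | succ n ih => rw [routeSq, ih, routeSq]

theorem routeSq_congr {n : ℕ}
    (h : ∀ k < n, (routeSq R p k).dirOf p = (routeSq R p k).dirOf q) :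
    routeSq R p n = routeSq R q n := by
  induction n with
  | zero => rfl
  | succ n ih =>
    rw [routeSq, routeSq, h n n.lt_succ_self, ih fun k hk => h k (hk.trans n.lt_succ_self)]

theorem exists_dirOf_routeSq_ne (hp : p ∈ R.set) (hq : q ∈ R.set) (hpq : p ≠ q) :
    ∃ n, (routeSq R p n).dirOf p ≠ (routeSq R p n).dirOf q := by
  by_contra! hdir
  have hdist (n : ℕ) : dist p q ≤ R.w / 2 ^ n := by
    have hq' : q ∈ (routeSq R p n).set :=
      routeSq_congr (fun k _ => hdir k) ▸ mem_routeSq hq n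
    exact routeSq_w R p n ▸ (Sq.dist_lt_w (mem_routeSq hp n) hq').le
  have hlim : Filter.Tendsto (fun n : ℕ => R.w / 2 ^ n) Filter.atTop (nhds 0) :=
    (tendsto_pow_atTop_atTop_of_one_lt one_lt_two).const_div_atTop R.w
  exact hpq (dist_le_zero.mp (ge_of_tendsto' hlim hdist))

end Routing

section Node

variable {R : Sq} {f : Dir → QTree}

theorem QTree.keys_mkNode (f : Dir → QTree) : (mkNode f).keys = ⋃ d, (f d).keys := by
  ext x
  simp only [mkNode, QTree.keys, Set.mem_union, Set.mem_iUnion]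
  constructor
  · rintro (((h | h) | h) | h) <;> exact ⟨_, h⟩
  · rintro ⟨d, h⟩
    cases d <;> tauto

theorem QTree.keys_mkNode_empty : (mkNode fun _ => .empty).keys = ∅ := by
  simp only [mkNode, keys, Set.union_empty]

theorem QTree.keys_mkNode_update {d : Dir} {t : QTree} {s : Set (ℝ × ℝ)}
    (ht : t.keys = (f d).keys ∪ s) :
    (mkNode (Function.update f d t)).keys = (mkNode f).keys ∪ s := by
  ext x
  simp only [keys_mkNode, Set.mem_union, Set.mem_iUnion]
  rw [Function.exists_update_iff f fun _ t' => x ∈ t'.keys, ht, Set.mem_union]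
  grind

theorem wf_mkNode (hf : ∀ d, WF (f d) (R.quad d)) : WF (mkNode f) R :=
  .internal _ _ _ _ _ (hf _) (hf _) (hf _) (hf _)

theorem forall_wf_update {d : Dir} {t : QTree} (hf : ∀ d', WF (f d') (R.quad d'))
    (ht : WF t (R.quad d)) (d' : Dir) : WF (Function.update f d t d') (R.quad d') :=
  (Function.forall_update_iff f fun d' t' => WF t' (R.quad d')).mpr ⟨ht, fun d' _ => hf d'⟩ d'

@[elab_as_elim]
theorem WF.induction_mkNode {motive : ∀ t R, WF t R → Prop}
    (empty : ∀ R, motive .empty R (.empty R))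
    (leaf : ∀ p R hp, motive (.leaf p) R (.leaf p R hp))
    (node : ∀ f R (hf : ∀ d, WF (f d) (R.quad d)), (∀ d, motive (f d) (R.quad d) (hf d)) →
      motive (mkNode f) R (wf_mkNode hf))
    {t : QTree} {R : Sq} (ht : WF t R) : motive t R ht := by
  induction ht with
  | empty R => exact empty R
  | leaf p R hp => exact leaf p R hp
  | internal a b c e R ha hb hc he iha ihb ihc ihe =>
    refine node (QTree.internal a b c e).child R ?_ ?_ <;> rintro (_ | _ | _ | _) <;> assumption

theorem qinsert_mkNode (p : ℝ × ℝ) (f : Dir → QTree) (R : Sq) :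
    qinsert p (mkNode f) R = mkNode (Function.update f (R.dirOf p)
      (qinsert p (f (R.dirOf p)) (R.quad (R.dirOf p)))) := by
  rw [mkNode, qinsert]
  cases R.dirOf p <;> rfl

end Node

section Split

variable {R : Sq} {p q : ℝ × ℝ}

theorem splitFuel_succ_of_eq (n : ℕ) (hdir : R.dirOf p = R.dirOf q) :
    splitFuel (n + 1) p q R = mkNode (Function.update (fun _ => .empty) (R.dirOf p)
      (splitFuel n p q (R.quad (R.dirOf p)))) := by
  rw [splitFuel, if_pos hdir]
  simp only [mkNode, Function.update_apply]

theorem splitFuel_succ_of_ne (n : ℕ) (hdir : R.dirOf p ≠ R.dirOf q) :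
    splitFuel (n + 1) p q R = mkNode (Function.update
      (Function.update (fun _ => .empty) (R.dirOf q) (.leaf q)) (R.dirOf p) (.leaf p)) := by
  rw [splitFuel, if_neg hdir]
  simp only [mkNode, Function.update_apply]

theorem wf_splitFuel (hp : p ∈ R.set) (hq : q ∈ R.set) (n : ℕ) :
    WF (splitFuel n p q R) R := by
  induction n generalizing R with
  | zero => exact .empty R
  | succ n ih =>
    have hp' := Sq.mem_quad_dirOf hp
    have hq' := Sq.mem_quad_dirOf hq
    by_cases hdir : R.dirOf p = R.dirOf q
    · rw [splitFuel_succ_of_eq n hdir]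
      exact wf_mkNode (forall_wf_update (fun _ => .empty _) (ih hp' (hdir ▸ hq')))
    · rw [splitFuel_succ_of_ne n hdir]
      exact wf_mkNode (forall_wf_update (forall_wf_update (fun _ => .empty _) (.leaf q _ hq'))
        (.leaf p _ hp'))

theorem keys_splitFuel {n : ℕ}
    (hsep : ∃ k < n, (routeSq R p k).dirOf p ≠ (routeSq R p k).dirOf q) :
    (splitFuel n p q R).keys = {q, p} := by
  induction n generalizing R with
  | zero =>
    obtain ⟨k, hk, _⟩ := hsep
    exact absurd hk k.not_lt_zero
  | succ n ih =>
    by_cases hdir : R.dirOf p = R.dirOf q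
    · have hsep' : ∃ k < n, (routeSq (R.quad (R.dirOf p)) p k).dirOf p ≠
          (routeSq (R.quad (R.dirOf p)) p k).dirOf q := by
        obtain ⟨_ | k, hk, hne⟩ := hsep
        · exact absurd hdir hne
        · exact ⟨k, Nat.lt_of_succ_lt_succ hk, routeSq_succ' R p k ▸ hne⟩
      rw [splitFuel_succ_of_eq n hdir, QTree.keys_mkNode_update (s := {q, p}),
        QTree.keys_mkNode_empty, Set.empty_union]
      rw [ih hsep', QTree.keys, Set.empty_union]
    · rw [splitFuel_succ_of_ne n hdir, QTree.keys_mkNode_update (s := {p}),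
        QTree.keys_mkNode_update (s := {q}), QTree.keys_mkNode_empty, Set.empty_union,
        Set.singleton_union]
      · rw [QTree.keys, QTree.keys, Set.empty_union]
      · rw [Function.update_of_ne hdir, QTree.keys, QTree.keys, Set.empty_union]

theorem wf_split (hp : p ∈ R.set) (hq : q ∈ R.set) : WF (split p q R) R :=
  wf_splitFuel hp hq _

theorem keys_split (hp : p ∈ R.set) (hq : q ∈ R.set) (hpq : p ≠ q) :
    (split p q R).keys = {q, p} := by
  classical
  have hsep := exists_dirOf_routeSq_ne hp hq hpq
  rw [split, splitDepth, dif_pos hsep]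
  exact keys_splitFuel ⟨_, Nat.lt_succ_self _, Nat.find_spec hsep⟩

end Split

section Insert

variable {R : Sq} {t : QTree} {p : ℝ × ℝ}

theorem wf_qinsert (ht : WF t R) (hp : p ∈ R.set) : WF (qinsert p t R) R := by
  induction ht using WF.induction_mkNode with
  | empty R => exact .leaf p R hp
  | leaf q R hq =>
    rw [qinsert]
    split_ifs
    · exact .leaf p R hp
    · exact wf_split hp hq
  | node f R hf ih =>
    rw [qinsert_mkNode]
    exact wf_mkNode (forall_wf_update hf (ih _ (Sq.mem_quad_dirOf hp)))

theorem keys_qinsert (ht : WF t R) (hp : p ∈ R.set) :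
    (qinsert p t R).keys = t.keys ∪ {p} := by
  induction ht using WF.induction_mkNode with
  | empty R => exact (Set.empty_union {p}).symm
  | leaf q R hq =>
    rw [qinsert]
    split_ifs with hqp
    · rw [hqp, QTree.keys, Set.union_self]
    · rw [keys_split hp hq (Ne.symm hqp), QTree.keys, Set.singleton_union]
  | node f R _ ih =>
    rw [qinsert_mkNode]
    exact QTree.keys_mkNode_update (ih _ (Sq.mem_quad_dirOf hp))

end Insert

/-- If `t` is a region quadtree well-formed for a half-open square `R` of side
`w > 0` and `p ∈ R`, then `insert(p, t, R)` is well-formed for `R` and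
`keys(insert(p, t, R)) = keys(t) ∪ {p}`.  In particular, insertion preserves the quadtree
properties: every leaf key remains inside the region of the node that stores it. -/
theorem insert_wf_and_keys (R : Sq) (hw : 0 < R.w) (t : QTree) (ht : WF t R)
    (p : ℝ × ℝ) (hp : p ∈ R.set) :
    WF (qinsert p t R) R ∧ (qinsert p t R).keys = t.keys ∪ {p} :=
  ⟨wf_qinsert ht hp, keys_qinsert ht hp⟩
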